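/- For every positive integer K, s(5, K, 2) = K if K ≡ 0 (mod 10), s(5, K, 2) = K + 1 if K ≡ 9 (mod 10), and s(5, K, 2) = K + 2 otherwise. -/

import Mathlib

open scoped Classical

/-- A placement delivery array with parameters `(F, K, Z)` over alphabet `S`:
an `F × K` array of cells that are either empty (`none`) or an element of `S`,
such that each column has exactly `Z` empty cells, no element occurs twice in a
row or in a column, and two equal entries in positions `(j₁,k₁)`, `(j₂,k₂)`
force the cells `(j₁,k₂)` and `(j₂,k₁)` to be empty. -/
def IsPDA {S : Type} (F K Z : ℕ) (A : Fin F → Fin K → Option S) : Prop :=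
  (∀ k : Fin K, (Finset.univ.filter fun j : Fin F => A j k = none).card = Z) ∧
  (∀ (j : Fin F) (k₁ k₂ : Fin K) (t : S), A j k₁ = some t → A j k₂ = some t → k₁ = k₂) ∧
  (∀ (j₁ j₂ : Fin F) (k : Fin K) (t : S), A j₁ k = some t → A j₂ k = some t → j₁ = j₂) ∧
  (∀ (j₁ j₂ : Fin F) (k₁ k₂ : Fin K) (t : S), j₁ ≠ j₂ → k₁ ≠ k₂ →
      A j₁ k₁ = some t → A j₂ k₂ = some t → A j₁ k₂ = none ∧ A j₂ k₁ = none)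

/-- `sPDA F K Z` is the minimum size of an alphabet `S` for which an `S`-PDA with
parameters `(F, K, Z)` exists. -/
noncomputable def sPDA (F K Z : ℕ) : ℕ :=
  sInf {n : ℕ | ∃ A : Fin F → Fin K → Option (Fin n), IsPDA F K Z A}

def pa : Fin 10 → Fin 5 := ![0,0,0,0,1,1,1,2,2,3]
def pb : Fin 10 → Fin 5 := ![1,2,3,4,2,3,4,3,4,4]
def ix : Fin 5 → Fin 5 → Fin 10 :=
  ![![0,0,1,2,3],![0,0,4,5,6],![1,4,0,7,8],![2,5,7,0,9],![3,6,8,9,0]]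
def ed (i : Fin 10) : Finset (Fin 5) := {pa i, pb i}

def bq (x y z : Bool) : ℕ := cond (x && !(y && z)) 1 0
def tq (x y z : Bool) : ℕ := bq x y z + bq y x z + bq z x y

def bet (b : Fin 10 → Bool) (i : Fin 10) (j : Fin 5) : ℕ :=
  if j = pa i ∨ j = pb i then 0
  else bq (b i) (b (ix (pa i) j)) (b (ix (pb i) j))

def Wt (b : Fin 10 → Bool) : ℕ := ∑ i, ∑ j, bet b i j

def W3 (b0 b1 b2 b3 b4 b5 b6 b7 b8 b9 : Bool) : ℕ :=
  tq b0 b1 b4 + tq b0 b2 b5 + tq b0 b3 b6 + tq b1 b2 b7 +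
  tq b1 b3 b8 + tq b2 b3 b9 + tq b4 b5 b7 + tq b4 b6 b8 +
  tq b5 b6 b9 + tq b7 b8 b9

theorem Wt_eq (b : Fin 10 → Bool) : 
    Wt b = W3 (b 0) (b 1) (b 2) (b 3) (b 4) (b 5) (b 6) (b 7) (b 8) (b 9) := by
  simp only [Wt, W3, tq, Fin.sum_univ_castSucc]
  simp [bet, pa, pb, ix]
  ring

def chk (w : ℕ) (b : Fin 10 → Bool) : Prop :=
  w ≤ 6 → (∀ i, b i = true) ∨ (∀ i, b i = false) ∨
    (w = 3 ∧ ∃ i, ∀ i', b i' = decide (i' = i)) ∨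
    (w = 6 ∧ ∃ i, ∀ i', b i' = decide (i' ≠ i)) ∨
    (w = 6 ∧ ∃ i, b i = true ∧ ∃ v, v ≠ pa i ∧ v ≠ pb i ∧
      ∀ i', (pa i' = v ∨ pb i' = v) → b i' = false)

theorem chk_aux : ∀ b0 b1 b2 b3 b4 b5 b6 b7 b8 b9 : Bool,
    chk (W3 b0 b1 b2 b3 b4 b5 b6 b7 b8 b9) ![b0,b1,b2,b3,b4,b5,b6,b7,b8,b9] := by
  unfold chk
  decide +kernel

theorem chk_all (b : Fin 10 → Bool) : chk (Wt b) b := by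
  have h := chk_aux (b 0) (b 1) (b 2) (b 3) (b 4) (b 5) (b 6) (b 7) (b 8) (b 9)
  have : b = ![b 0, b 1, b 2, b 3, b 4, b 5, b 6, b 7, b 8, b 9] := by
    funext i
    fin_cases i <;> rfl
  rw [Wt_eq]
  rw [← this] at h
  exact h

theorem ed_card : ∀ i, (ed i).card = 2 := by decide
theorem ed_inj : ∀ i i', ed i = ed i' → i = i' := by decide
theorem ed_surj : ∀ E : Finset (Fin 5), E.card = 2 → ∃ i, ed i = E := by decide
theorem mem_ed (i : Fin 10) (v : Fin 5) : v ∈ ed i ↔ (v = pa i ∨ v = pb i) := by simp [ed]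
theorem ed_rel : ∀ i j, j ∉ ed i →
    (pb i ∉ ed (ix (pa i) j) ∧ insert j (ed i) = insert (pb i) (ed (ix (pa i) j))) ∧
    (pa i ∉ ed (ix (pb i) j) ∧ insert j (ed i) = insert (pa i) (ed (ix (pb i) j))) := by decide

theorem bet_le (f : Fin 10 → ℕ) (g : Fin 10 → Fin 5 → ℕ)
    (h : ∀ i j i' j', j ∉ ed i → j' ∉ ed i' → insert j (ed i) = insert j' (ed i') →
      f i + g i' j' = f i' + g i j) (i0 : Fin 10) (hm : ∀ i, f i0 ≤ f i) (i : Fin 10) (j : Fin 5) :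
    bet (fun i => decide (f i0 < f i)) i j ≤ g i j := by
  unfold bet bq
  rw [Bool.cond_eq_ite]
  split_ifs with h1 h2
  · omega
  · rw [← mem_ed] at h1
    obtain ⟨⟨r1, r2⟩, r3, r4⟩ := ed_rel i j h1
    have e1 := h i j _ _ h1 r1 r2
    have e2 := h i j _ _ h1 r3 r4
    have := hm (ix (pa i) j)
    have := hm (ix (pb i) j)
    simp only [Bool.and_eq_true, decide_eq_true_eq, Bool.not_eq_true', Bool.and_eq_false_iff,
      decide_eq_false_iff_not] at h2
    omega
  · omega

theorem caseB (f : Fin 10 → ℕ) (g : Fin 10 → Fin 5 → ℕ)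
    (h : ∀ i j i' j', j ∉ ed i → j' ∉ ed i' → insert j (ed i) = insert j' (ed i') →
      f i + g i' j' = f i' + g i j) (i0 : Fin 10)
    (hg : ∀ i j, g i j = bet (fun i => decide (i ≠ i0)) i j) (i : Fin 10) (hi : i ≠ i0) :
    f i = f i0 + 1 := by
  have key : ∀ i0 i : Fin 10, i ≠ i0 →
      (∃ j, j ∉ ed i ∧ ∃ j', j' ∉ ed i0 ∧ insert j (ed i) = insert j' (ed i0) ∧
        bet (fun i => decide (i ≠ i0)) i j = bet (fun i => decide (i ≠ i0)) i0 j' + 1) ∨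
      (∃ i1, (∃ j, j ∉ ed i ∧ ∃ j', j' ∉ ed i1 ∧ insert j (ed i) = insert j' (ed i1) ∧
        bet (fun i => decide (i ≠ i0)) i j = bet (fun i => decide (i ≠ i0)) i1 j') ∧
        ∃ k, k ∉ ed i1 ∧ ∃ k', k' ∉ ed i0 ∧ insert k (ed i1) = insert k' (ed i0) ∧
        bet (fun i => decide (i ≠ i0)) i1 k = bet (fun i => decide (i ≠ i0)) i0 k' + 1) := by
    decide +kernel
  rcases key i0 i hi with ⟨j, a1, j', a2, a3, a4⟩ |
    ⟨i1, ⟨j, a1, j', a2, a3, a4⟩, k, a5, k', a6, a7, a8⟩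
  · have := h _ _ _ _ a1 a2 a3
    rw [← hg, ← hg] at a4
    omega
  · have := h _ _ _ _ a1 a2 a3
    have := h _ _ _ _ a5 a6 a7
    rw [← hg, ← hg] at a4 a8
    omega
section low
variable {K n : ℕ}

noncomputable def emp (A : Fin 5 → Fin K → Option (Fin n)) (k : Fin K) : Finset (Fin 5) :=
  Finset.univ.filter fun j => A j k = none
noncomputable def RR (A : Fin 5 → Fin K → Option (Fin n)) (t : Fin n) : Finset (Fin 5) :=
  Finset.univ.filter fun j => ∃ k, A j k = some t
noncomputable def nn (A : Fin 5 → Fin K → Option (Fin n)) (E : Finset (Fin 5)) : ℕ :=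
  (Finset.univ.filter fun k => emp A k = E).card
noncomputable def yset (A : Fin 5 → Fin K → Option (Fin n)) (E : Finset (Fin 5)) (j : Fin 5) :
    Finset (Fin K) :=
  Finset.univ.filter fun k => emp A k = E ∧ ∃ t, A j k = some t ∧ (RR A t).card ≠ 3
noncomputable def yy (A : Fin 5 → Fin K → Option (Fin n)) (E : Finset (Fin 5)) (j : Fin 5) : ℕ :=
  (yset A E j).card

variable {A : Fin 5 → Fin K → Option (Fin n)} (h : IsPDA 5 K 2 A)

theorem mem_emp (k j) : j ∈ emp A k ↔ A j k = none := by simp [emp]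
theorem mem_RR (t j) : j ∈ RR A t ↔ ∃ k, A j k = some t := by simp [RR]
include h
theorem emp_card (k) : (emp A k).card = 2 := by
  rw [← h.1 k, emp]

theorem not_emp {j k t} (hj : A j k = some t) : j ∉ emp A k := by
  rw [mem_emp, hj]; simp

theorem other {j k t i} (hj : A j k = some t) (hi : i ∈ RR A t) (hij : i ≠ j) :
    ∃ k', A i k' = some t ∧ i ∈ emp A k ∧ j ∈ emp A k' := by
  rw [mem_RR] at hi
  obtain ⟨k', hk'⟩ := hi
  have hk : k' ≠ k := by
    rintro rfl
    exact hij (h.2.2.1 _ _ _ _ hk' hj)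
  have := h.2.2.2 _ _ _ _ _ hij hk hk' hj
  exact ⟨k', hk', by rw [mem_emp]; exact this.1, by rw [mem_emp]; exact this.2⟩

theorem RR_sub {j k t} (hj : A j k = some t) : RR A t ⊆ insert j (emp A k) := by
  intro i hi
  by_cases hij : i = j
  · simp [hij]
  · obtain ⟨k', _, h2, _⟩ := other h hj hi hij
    exact Finset.mem_insert_of_mem h2

theorem ins_card {j k t} (hj : A j k = some t) : (insert j (emp A k)).card = 3 := by
  rw [Finset.card_insert_of_notMem (not_emp h hj), emp_card h]

theorem RR_le (t) : (RR A t).card ≤ 3 := by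
  rcases (RR A t).eq_empty_or_nonempty with e | ⟨j, hj⟩
  · simp [e]
  · obtain ⟨k, hk⟩ := (mem_RR t j).1 hj
    rw [← ins_card h hk]
    exact Finset.card_le_card (RR_sub h hk)

theorem RR_full {j k t} (hj : A j k = some t) (hc : (RR A t).card = 3) :
    RR A t = insert j (emp A k) :=
  Finset.eq_of_subset_of_card_le (RR_sub h hj) (by rw [ins_card h hj, hc])

theorem rowcard (j : Fin 5) (Q : Fin n → Prop) :
    (Finset.univ.filter fun k => ∃ t, A j k = some t ∧ Q t).card =
      (Finset.univ.filter fun t => Q t ∧ j ∈ RR A t).card := by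
  have e : (Finset.univ.filter fun k => ∃ t, A j k = some t ∧ Q t).image (A j) =
      (Finset.univ.filter fun t => Q t ∧ j ∈ RR A t).image some := by
    ext o
    simp only [Finset.mem_image, Finset.mem_filter, Finset.mem_univ, true_and, mem_RR]
    constructor
    · rintro ⟨k, ⟨t, h1, h2⟩, rfl⟩
      exact ⟨t, ⟨h2, k, h1⟩, h1.symm⟩
    · rintro ⟨t, ⟨h2, k, h1⟩, rfl⟩
      exact ⟨k, ⟨t, h1, h2⟩, h1⟩
  rw [← Finset.card_image_of_injective _ (Option.some_injective (Fin n)), ← e,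
    Finset.card_image_of_injOn]
  intro k hk k' hk' hkk
  simp only [Finset.coe_filter, Finset.mem_univ, true_and, Set.mem_ofPred_eq] at hk hk'
  obtain ⟨t, h1, _⟩ := hk
  exact h.2.1 j k k' t h1 (by rw [← hkk, h1])

theorem sumR (Q : Fin n → Prop) :
    ∑ t ∈ Finset.univ.filter Q, (RR A t).card =
      ∑ j, (Finset.univ.filter fun k => ∃ t, A j k = some t ∧ Q t).card := by
  simp_rw [rowcard h]
  have : ∀ t, (RR A t).card = ∑ j, if j ∈ RR A t then 1 else 0 := by
    intro t; simp
  simp_rw [this]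
  rw [Finset.sum_comm]
  refine Finset.sum_congr rfl fun j _ => ?_
  rw [← Finset.filter_filter, Finset.card_filter]

theorem sum_all : ∑ t, (RR A t).card = 3 * K := by
  have := sumR h (fun _ => True)
  simp only [Finset.filter_true, and_true] at this
  rw [this]
  simp_rw [Finset.card_filter]
  rw [Finset.sum_comm]
  have e : ∀ k, (∑ j, if ∃ t, A j k = some t then 1 else 0) = 3 := by
    intro k
    rw [← Finset.card_filter]
    have : (Finset.univ.filter fun j => ∃ t, A j k = some t) = (emp A k)ᶜ := by
      ext j
      simp [mem_emp, Option.ne_none_iff_exists']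
    rw [this, Finset.card_compl, emp_card h]
    simp
  simp [e, mul_comm]

theorem nxy (E : Finset (Fin 5)) (j : Fin 5) (hE : E.card = 2) (hj : j ∉ E) :
    nn A E = (Finset.univ.filter fun t => RR A t = insert j E).card + yy A E j := by
  have hc : (insert j E).card = 3 := by rw [Finset.card_insert_of_notMem hj, hE]
  have e1 := rowcard h j (fun t => RR A t = insert j E)
  have e2 : (Finset.univ.filter fun t => RR A t = insert j E ∧ j ∈ RR A t) =
      (Finset.univ.filter fun t => RR A t = insert j E) := by
    ext t
    simp only [Finset.mem_filter, Finset.mem_univ, true_and, and_iff_left_iff_imp]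
    intro ht
    rw [ht]; simp
  have e3 : (Finset.univ.filter fun t => RR A t = insert j E).card =
      (Finset.univ.filter fun k => ∃ t, A j k = some t ∧ RR A t = insert j E).card := by
    rw [← e2]
    convert e1.symm
  rw [e3, nn, yy, ← Finset.card_union_of_disjoint]
  · congr 1
    ext k
    simp only [Finset.mem_union, Finset.mem_filter, Finset.mem_univ, true_and, yset]
    constructor
    · intro hk
      have : A j k ≠ none := by
        rw [Ne, ← mem_emp, hk]; exact hj
      obtain ⟨t, ht⟩ := Option.ne_none_iff_exists'.1 this
      by_cases hf : (RR A t).card = 3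
      · left
        exact ⟨t, ht, by rw [RR_full h ht hf, hk]⟩
      · right
        exact ⟨hk, t, ht, hf⟩
    · rintro (⟨t, ht, hR⟩ | ⟨hk, _⟩)
      · have := RR_full h ht (by rw [hR, hc])
        rw [hR] at this
        have h2 := congrArg (fun s => Finset.erase s j) this
        simpa [Finset.erase_insert hj, Finset.erase_insert (not_emp h ht)] using h2.symm
      · exact hk
  · rw [Finset.disjoint_left]
    intro k hk hk'
    simp only [Finset.mem_filter, Finset.mem_univ, true_and, yset] at hk hk'
    obtain ⟨t, ht, hR⟩ := hk
    obtain ⟨_, t', ht', hR'⟩ := hk'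
    rw [ht] at ht'
    cases ht'
    exact hR' (by rw [hR, hc])

theorem fib (S : Finset (Fin K)) :
    S.card = ∑ i, (S.filter fun k => emp A k = ed i).card := by
  simp_rw [Finset.card_filter]
  rw [Finset.sum_comm]
  have : ∀ k, (∑ i, if emp A k = ed i then 1 else 0) = 1 := by
    intro k
    obtain ⟨i, hi⟩ := ed_surj _ (emp_card h k)
    rw [Finset.sum_eq_single i]
    · simp [hi]
    · intro i' _ hne
      rw [if_neg]
      intro he
      exact hne (ed_inj _ _ (by rw [hi, he]))
    · simp
  simp [this]

theorem sum_nn : ∑ i, nn A (ed i) = K := by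
  have := fib h (Finset.univ)
  simp only [Finset.card_univ, Fintype.card_fin] at this
  exact this.symm

theorem sum_yy : ∑ i, ∑ j, yy A (ed i) j =
    ∑ t ∈ Finset.univ.filter (fun t => (RR A t).card ≠ 3), (RR A t).card := by
  have e := sumR h (fun t => (RR A t).card ≠ 3)
  have e' : ∑ t ∈ Finset.univ.filter (fun t => (RR A t).card ≠ 3), (RR A t).card =
      ∑ j, (Finset.univ.filter fun k => ∃ t, A j k = some t ∧ (RR A t).card ≠ 3).card := by
    convert e
  rw [e', Finset.sum_comm]
  refine Finset.sum_congr rfl fun j _ => ?_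
  rw [fib h (Finset.univ.filter _)]
  refine Finset.sum_congr rfl fun i _ => ?_
  rw [yy, yset, Finset.filter_filter]
  congr 1
  ext k
  simp [and_comm]

theorem yrel (i j i' j') (hj : j ∉ ed i) (hj' : j' ∉ ed i')
    (he : insert j (ed i) = insert j' (ed i')) :
    nn A (ed i) + yy A (ed i') j' = nn A (ed i') + yy A (ed i) j := by
  have h1 := nxy h _ _ (ed_card i) hj
  have h2 := nxy h _ _ (ed_card i') hj'
  rw [he] at h1
  omega

omit h in
theorem yy_pos {E j} (hy : 1 ≤ yy A E j) :
    ∃ k t, emp A k = E ∧ A j k = some t ∧ (RR A t).card ≠ 3 := by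
  obtain ⟨k, hk⟩ := Finset.card_pos.1 hy
  simp only [yset, Finset.mem_filter, Finset.mem_univ, true_and] at hk
  obtain ⟨h1, t, h2, h3⟩ := hk
  exact ⟨k, t, h1, h2, h3⟩

omit h in
theorem yy_pos' {j k t} (h2 : A j k = some t) (h3 : (RR A t).card ≠ 3) :
    1 ≤ yy A (emp A k) j := by
  refine Finset.card_pos.2 ⟨k, ?_⟩
  simp only [yset, Finset.mem_filter, Finset.mem_univ, true_and]
  exact ⟨t, h2, h3⟩

/-- Cells of type `E` carrying a non-full symbol inject into the non-full symbols. -/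
theorem typ_card (E : Finset (Fin 5)) :
    ∑ j, yy A E j = (Finset.univ.filter fun t => (RR A t).card ≠ 3 ∧
      ∃ j k, A j k = some t ∧ emp A k = E).card := by
  have e : ∀ j, yy A E j = (Finset.univ.filter fun t =>
      ((RR A t).card ≠ 3 ∧ ∃ k, A j k = some t ∧ emp A k = E)).card := by
    intro j
    have := rowcard h j (fun t => (RR A t).card ≠ 3 ∧ ∃ k, A j k = some t ∧ emp A k = E)
    have e1 : (Finset.univ.filter fun t => ((RR A t).card ≠ 3 ∧ ∃ k, A j k = some t ∧ emp A k = E)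
        ∧ j ∈ RR A t) = (Finset.univ.filter fun t =>
      ((RR A t).card ≠ 3 ∧ ∃ k, A j k = some t ∧ emp A k = E)) := by
      ext t
      simp only [Finset.mem_filter, Finset.mem_univ, true_and, and_iff_left_iff_imp]
      rintro ⟨_, k, hk, _⟩
      rw [mem_RR]
      exact ⟨k, hk⟩
    have e2 : (Finset.univ.filter fun t =>
      ((RR A t).card ≠ 3 ∧ ∃ k, A j k = some t ∧ emp A k = E)).card = (Finset.univ.filter fun k =>
        ∃ t, A j k = some t ∧ (RR A t).card ≠ 3 ∧ ∃ k, A j k = some t ∧ emp A k = E).card := by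
      rw [← e1]
      convert this.symm
    rw [e2, yy, yset]
    congr 1
    ext k
    simp only [Finset.mem_filter, Finset.mem_univ, true_and]
    constructor
    · rintro ⟨hk, t, ht, hc⟩
      exact ⟨t, ht, hc, k, ht, hk⟩
    · rintro ⟨t, ht, hc, k', ht', hk'⟩
      have := h.2.1 _ _ _ _ ht ht'
      subst this
      exact ⟨hk', t, ht, hc⟩
  simp_rw [e]
  rw [← Finset.card_biUnion]
  · congr 1
    ext t
    simp
  · intro j _ j' _ hjj
    rw [Function.onFun, Finset.disjoint_left]
    intro t ht ht'
    simp only [Finset.mem_filter, Finset.mem_univ, true_and] at ht ht'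
    obtain ⟨_, k, hk, hE⟩ := ht
    obtain ⟨_, k', hk', hE'⟩ := ht'
    have hj : j ∈ RR A t := by rw [mem_RR]; exact ⟨k, hk⟩
    obtain ⟨_, _, h3, _⟩ := other h hk' hj hjj
    rw [hE', ← hE] at h3
    exact not_emp h hk h3

set_option maxHeartbeats 400000 in
theorem lower : K ≤ n ∧ (n = K → K % 10 = 0) ∧ (n = K + 1 → K % 10 = 0 ∨ K % 10 = 9) := by
  have hall := sum_all h
  have hKn : K ≤ n := by
    have : ∑ t, (RR A t).card ≤ ∑ t : Fin n, 3 := Finset.sum_le_sum fun t _ => RR_le h t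
    simp at this
    omega
  set V := Finset.univ.filter (fun t => (RR A t).card ≠ 3) with hV
  have hsplit : ∑ t ∈ V, (RR A t).card + 3 * (n - V.card) = 3 * K ∧ V.card ≤ n := by
    have h1 := Finset.sum_filter_add_sum_filter_not Finset.univ
      (fun t => (RR A t).card ≠ 3) (fun t => (RR A t).card)
    have h2 : ∑ t ∈ Finset.univ.filter (fun t => ¬ (RR A t).card ≠ 3), (RR A t).card =
        ∑ t ∈ Finset.univ.filter (fun t => ¬ (RR A t).card ≠ 3), 3 := by
      refine Finset.sum_congr rfl fun t ht => ?_
      simpa using ht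
    have h3 := Finset.card_filter_add_card_filter_not (s := (Finset.univ : Finset (Fin n)))
      (fun t => (RR A t).card ≠ 3)
    rw [h2, hall] at h1
    simp only [Finset.sum_const, smul_eq_mul, Finset.card_univ, Fintype.card_fin] at h1 h3
    rw [← hV] at h1 h3
    constructor <;> omega
  obtain ⟨hs, hVn⟩ := hsplit
  have hV2 : ∑ t ∈ V, (RR A t).card ≤ 2 * V.card := by
    have : ∑ t ∈ V, (RR A t).card ≤ ∑ t ∈ V, 2 := by
      refine Finset.sum_le_sum fun t ht => ?_
      have := RR_le h t
      simp only [hV, Finset.mem_filter, Finset.mem_univ, true_and] at ht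
      omega
    simpa [mul_comm] using this
  have hY := sum_yy h
  rw [← hV] at hY
  have hnn := sum_nn h
  have hrel := yrel h
  obtain ⟨i0, -, hi0⟩ := Finset.exists_min_image Finset.univ (fun i => nn A (ed i)) ⟨0, by simp⟩
  have hm : ∀ i, nn A (ed i0) ≤ nn A (ed i) := fun i => hi0 i (by simp)
  have hbet := bet_le (fun i => nn A (ed i)) (fun i j => yy A (ed i) j) hrel i0 hm
  have hchk := chk_all (fun i => decide (nn A (ed i0) < nn A (ed i)))
  set b : Fin 10 → Bool := (fun i => decide (nn A (ed i0) < nn A (ed i))) with hb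
  have hW : Wt b ≤ ∑ i, ∑ j, yy A (ed i) j :=
    Finset.sum_le_sum fun i _ => Finset.sum_le_sum fun j _ => hbet i j
  have hbf : ∀ i, b i = false → nn A (ed i) = nn A (ed i0) := by
    intro i hi
    have := hm i
    simp only [hb, decide_eq_false_iff_not] at hi
    omega
  clear_value b V
  by_cases hn : n ≤ K + 1
  swap
  · exact ⟨hKn, by omega, by omega⟩
  have hc2' : 6 ≤ ∑ i, ∑ j, yy A (ed i) j → ∀ t ∈ V, 2 ≤ (RR A t).card := by
    intro h6 t htV
    have h1 := Finset.add_sum_erase V (fun t => (RR A t).card) htV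
    have h2 : ∑ t ∈ V.erase t, (RR A t).card ≤ ∑ t ∈ V.erase t, 2 := by
      refine Finset.sum_le_sum fun t ht => ?_
      have := RR_le h t
      have ht := Finset.mem_of_mem_erase ht
      simp only [hV, Finset.mem_filter, Finset.mem_univ, true_and] at ht
      omega
    simp only [Finset.sum_const, smul_eq_mul, Finset.card_erase_of_mem htV] at h2
    omega
  have hsum' : Wt b = 6 →
      ∑ p : Fin 10 × Fin 5, bet b p.1 p.2 = ∑ p : Fin 10 × Fin 5, yy A (ed p.1) p.2 := by
    intro w
    have h1 : ∑ p : Fin 10 × Fin 5, bet b p.1 p.2 = Wt b := Fintype.sum_prod_type _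
    have h2 : ∑ p : Fin 10 × Fin 5, yy A (ed p.1) p.2 = ∑ i, ∑ j, yy A (ed i) j :=
      Fintype.sum_prod_type _
    rw [h1, h2]
    omega
  rcases hchk (by omega) with c | c | ⟨w, i1, c⟩ | ⟨w, i1, c⟩ | ⟨w, i1, c3, v, c1, c2, c4⟩
  · have := c i0
    simp [hb] at this
  · have : ∑ i, nn A (ed i) = ∑ i : Fin 10, nn A (ed i0) :=
      Finset.sum_congr rfl fun i _ => hbf i (c i)
    simp at this
    refine ⟨hKn, ?_, ?_⟩ <;> intros <;> omega
  · -- one large type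
    exfalso
    have hge : ∀ j, j ∉ ed i1 → 1 ≤ yy A (ed i1) j := by
      intro j hj
      obtain ⟨⟨r1, r2⟩, -⟩ := ed_rel i1 j hj
      have e1 := hrel _ _ _ _ hj r1 r2
      have hne : ix (pa i1) j ≠ i1 := by
        intro he
        rw [he] at r1
        exact r1 (by simp [ed])
      have b1 := hbf (ix (pa i1) j) (by rw [c]; simpa using hne)
      have b2 := c i1
      simp [hb] at b2
      omega
    have ht := typ_card h (ed i1)
    have hsub : (Finset.univ.filter fun t => (RR A t).card ≠ 3 ∧
      ∃ j k, A j k = some t ∧ emp A k = ed i1) ⊆ V := by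
      intro t
      simp only [hV, Finset.mem_filter, Finset.mem_univ, true_and]
      exact fun x => x.1
    have hsc := Finset.card_le_card hsub
    have hge2 : ∀ S : Finset (Fin 5), (∀ j ∈ S, j ∉ ed i1) → S.card ≤ ∑ j ∈ S, yy A (ed i1) j := by
      intro S hS
      rw [Finset.card_eq_sum_ones]
      exact Finset.sum_le_sum fun j hj => hge j (hS j hj)
    have h3 : 3 ≤ ∑ j, yy A (ed i1) j := by
      have h1 := hge2 (ed i1)ᶜ (by simp)
      rw [Finset.card_compl, ed_card] at h1
      refine le_trans h1 (Finset.sum_le_sum_of_subset (Finset.subset_univ _))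
    have hVc : V.card = 3 := by omega
    have hVeq := Finset.eq_of_subset_of_card_le hsub (by omega)
    have hone : ∀ j, j ∉ ed i1 → yy A (ed i1) j = 1 := by
      intro j hj
      have h1 := hge2 ((ed i1)ᶜ.erase j) (by simp)
      rw [Finset.card_erase_of_mem (by simpa using hj), Finset.card_compl, ed_card] at h1
      have h2 := Finset.sum_le_sum_of_subset (f := fun j => yy A (ed i1) j)
        (Finset.subset_univ (ed i1)ᶜ)
      rw [← Finset.add_sum_erase _ _ (show j ∈ (ed i1)ᶜ by simpa using hj)] at h2
      have := hge j hj
      simp at h1 h2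
      omega
    have hc2 := hc2' (by omega)
    -- every leftover cell not of type `ed i1` lies in a row of `ed i1`
    have hrow : ∀ j k t, A j k = some t → (RR A t).card ≠ 3 → emp A k ≠ ed i1 → j ∈ ed i1 := by
      intro j k t hjk hc hne
      have htV : t ∈ V := by simp [hV, hc]
      rw [← hVeq] at htV
      simp only [Finset.mem_filter, Finset.mem_univ, true_and] at htV
      obtain ⟨_, j', k', hjk', hE⟩ := htV
      have hj : j ∈ RR A t := by rw [mem_RR]; exact ⟨k, hjk⟩
      have hjj : j ≠ j' := by
        rintro rfl
        have := h.2.1 _ _ _ _ hjk hjk'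
        subst this
        exact hne hE
      obtain ⟨_, _, h3, _⟩ := other h hjk' hj hjj
      rwa [← hE]
    -- pick a leftover
    obtain ⟨j, hj⟩ : ∃ j, j ∉ ed i1 := by
      have := ed_card i1
      by_contra! hh
      have e : ed i1 = Finset.univ := Finset.eq_univ_of_forall hh
      rw [e] at this
      simp at this
    obtain ⟨k, t, hk, hjk, hc⟩ := yy_pos (hge j hj)
    have htV : t ∈ V := by simp [hV, hc]
    have hjR : j ∈ RR A t := by rw [mem_RR]; exact ⟨k, hjk⟩
    obtain ⟨i, hiR, hij⟩ := Finset.exists_mem_ne (lt_of_lt_of_le one_lt_two (hc2 t htV)) j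
    obtain ⟨k', hik', hi1, hjk'⟩ := other h hjk hiR hij
    rw [hk] at hi1
    have hi' := not_emp h hik'
    have hy' := yy_pos' hik' hc
    obtain ⟨i2, hi2⟩ := ed_surj _ (emp_card h k')
    rw [← hi2] at hy' hjk' hi'
    have hne2 : i2 ≠ i1 := by rintro rfl; exact hj hjk'
    have b2 := hbf i2 (by rw [c]; simpa using hne2)
    -- third edge
    obtain ⟨i3, hj3, hins⟩ : ∃ i3, j ∉ ed i3 ∧ insert i (ed i2) = insert j (ed i3) := by
      rw [mem_ed] at hjk'
      obtain ⟨⟨r1, r2⟩, r3, r4⟩ := ed_rel i2 i hi'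
      rcases hjk' with rfl | rfl
      · exact ⟨_, r3, r4⟩
      · exact ⟨_, r1, r2⟩
    have e1 := hrel _ _ _ _ hi' hj3 hins
    by_cases h31 : i3 = i1
    · subst h31
      have := hone j hj
      have b3 := c i3
      simp [hb] at b3
      omega
    · have b3 := hbf i3 (by rw [c]; simpa using h31)
      have : 1 ≤ yy A (ed i3) j := by omega
      obtain ⟨k3, t3, q1, q2, q3⟩ := yy_pos this
      exact hj (hrow j k3 t3 q2 q3 (by rw [q1]; exact fun e => h31 (ed_inj _ _ e)))
  · -- one small type
    have hsum := hsum' w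
    have hpt := (Finset.sum_eq_sum_iff_of_le (fun p _ => hbet p.1 p.2)).1 hsum
    have hbe : b = fun i => decide (i ≠ i1) := funext c
    have hB := caseB (fun i => nn A (ed i)) (fun i j => yy A (ed i) j) hrel i1
      (fun i j => by rw [← hbe]; exact (hpt (i, j) (by simp)).symm)
    have h1 := Finset.add_sum_erase Finset.univ (fun i => nn A (ed i)) (Finset.mem_univ i1)
    have h2 : ∑ i ∈ Finset.univ.erase i1, nn A (ed i) =
        ∑ i ∈ Finset.univ.erase i1, (nn A (ed i1) + 1) :=
      Finset.sum_congr rfl fun i hi => hB i (Finset.ne_of_mem_erase hi)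
    simp [Finset.card_erase_of_mem] at h2
    refine ⟨hKn, ?_, ?_⟩ <;> intros <;> omega
  · exfalso
    have hv : v ∉ ed i1 := by rw [mem_ed, not_or]; exact ⟨c1, c2⟩
    have hc2 := hc2' (by omega)
    have hsum := hsum' w
    have hpt := (Finset.sum_eq_sum_iff_of_le (fun p _ => hbet p.1 p.2)).1 hsum
    have hy1 : 1 ≤ yy A (ed i1) v := by
      have h1 := hpt (i1, v) (by simp)
      have h2 : b (ix (pa i1) v) = false := c4 _ (by
        have : ∀ i v, v ≠ pa i → (pa (ix (pa i) v) = v ∨ pb (ix (pa i) v) = v) := by decide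
        exact this i1 v c1)
      simp only [bet, bq, c1, c2, c3, h2] at h1
      simp at h1
      omega
    obtain ⟨k, t, hk, hjk, hc⟩ := yy_pos hy1
    have htV : t ∈ V := by simp [hV, hc]
    obtain ⟨i, hiR, hij⟩ := Finset.exists_mem_ne (lt_of_lt_of_le one_lt_two (hc2 t htV)) v
    obtain ⟨k', hik', hi1, hjk'⟩ := other h hjk hiR hij
    have hy' := yy_pos' hik' hc
    obtain ⟨i2, hi2⟩ := ed_surj _ (emp_card h k')
    rw [← hi2] at hy' hjk'
    have hbi : b i2 = false := c4 i2 (((mem_ed _ _).1 hjk').imp Eq.symm Eq.symm)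
    have h1 := hpt (i2, i) (by simp)
    simp only [bet, bq, hbi] at h1
    simp at h1
    omega

end low
def PP (K n : ℕ) : Prop := ∃ A : Fin 5 → Fin K → Option (Fin n), IsPDA 5 K 2 A

def dec (n t : ℕ) : Option (Fin n) := if h : t - 1 < n ∧ 0 < t then some ⟨t - 1, h.1⟩ else none

def okB (K n : ℕ) (A : Fin 5 → Fin K → Option (Fin n)) : Bool :=
  decide (∀ k : Fin K, (Finset.univ.filter fun j : Fin 5 => (A j k).isNone = true).card = 2) &&
  decide (∀ (j₁ j₂ : Fin 5) (k₁ k₂ : Fin K), (A j₁ k₁).isSome = true → A j₁ k₁ = A j₂ k₂ →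
    (j₁ = j₂ ∧ k₁ = k₂) ∨ (j₁ ≠ j₂ ∧ k₁ ≠ k₂ ∧ (A j₁ k₂).isNone = true ∧ (A j₂ k₁).isNone = true))

theorem okB_PP (K n : ℕ) (A : Fin 5 → Fin K → Option (Fin n)) (h : okB K n A = true) : PP K n := by
  unfold okB at h
  rw [Bool.and_eq_true, decide_eq_true_eq, decide_eq_true_eq] at h
  obtain ⟨h1, h2⟩ := h
  refine ⟨A, ?_, ?_, ?_, ?_⟩
  · intro k
    rw [← h1 k]
    congr 1
    ext j
    simp
  · intro j k₁ k₂ t a b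
    have := h2 j j k₁ k₂ (by simp [a]) (by rw [a, b])
    simpa using this
  · intro j₁ j₂ k t a b
    have := h2 j₁ j₂ k k (by simp [a]) (by rw [a, b])
    simpa using this
  · intro j₁ j₂ k₁ k₂ t hj hk a b
    have := h2 j₁ j₂ k₁ k₂ (by simp [a]) (by rw [a, b])
    simpa [hj, hk] using this

theorem pp1 : PP 1 3 := okB_PP _ _ (fun j k => dec 3 ((![![1], ![2], ![3], ![0], ![0]] : Fin 5 → Fin 1 → ℕ) j k))
  (by decide +kernel)

theorem pp2 : PP 2 4 := okB_PP _ _ (fun j k => dec 4 ((![![1, 2], ![3, 0], ![4, 0], ![0, 3], ![0, 4]] : Fin 5 → Fin 2 → ℕ) j k))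
  (by decide +kernel)

theorem pp3 : PP 3 5 := okB_PP _ _ (fun j k => dec 5 ((![![4, 0, 1], ![0, 5, 0], ![2, 1, 0], ![3, 0, 5], ![0, 3, 2]] : Fin 5 → Fin 3 → ℕ) j k))
  (by decide +kernel)

theorem pp4 : PP 4 6 := okB_PP _ _ (fun j k => dec 6 ((![![6, 1, 0, 3], ![5, 4, 3, 0], ![0, 2, 6, 0], ![2, 0, 1, 4], ![0, 0, 0, 5]] : Fin 5 → Fin 4 → ℕ) j k))
  (by decide +kernel)

theorem pp5 : PP 5 7 := okB_PP _ _ (fun j k => dec 7 ((![![3, 0, 0, 5, 6], ![0, 4, 6, 2, 0], ![4, 0, 5, 0, 7], ![0, 7, 3, 1, 0], ![1, 5, 0, 0, 2]] : Fin 5 → Fin 5 → ℕ) j k))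
  (by decide +kernel)

theorem pp6 : PP 6 8 := okB_PP _ _ (fun j k => dec 8 ((![![5, 4, 0, 0, 3, 6], ![0, 8, 6, 1, 2, 0], ![0, 0, 5, 4, 7, 8], ![8, 0, 0, 3, 0, 0], ![2, 7, 3, 0, 0, 1]] : Fin 5 → Fin 6 → ℕ) j k))
  (by decide +kernel)

theorem pp7 : PP 7 9 := okB_PP _ _ (fun j k => dec 9 ((![![0, 6, 0, 4, 1, 5, 3], ![1, 0, 6, 7, 0, 2, 0], ![0, 0, 4, 0, 7, 8, 9], ![5, 9, 3, 8, 2, 0, 0], ![4, 7, 0, 0, 0, 0, 2]] : Fin 5 → Fin 7 → ℕ) j k))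
  (by decide +kernel)

theorem pp8 : PP 8 10 := okB_PP _ _ (fun j k => dec 10 ((![![5, 6, 0, 3, 0, 0, 4, 1], ![9, 7, 4, 0, 0, 3, 0, 2], ![0, 0, 5, 0, 7, 8, 9, 10], ![0, 10, 0, 9, 4, 1, 0, 0], ![10, 0, 1, 8, 6, 0, 2, 0]] : Fin 5 → Fin 8 → ℕ) j k))
  (by decide +kernel)

theorem pp9 : PP 9 10 := okB_PP _ _ (fun j k => dec 10 ((![![1, 2, 3, 4, 5, 6, 0, 0, 0], ![0, 9, 0, 8, 0, 7, 3, 5, 0], ![0, 0, 9, 10, 7, 0, 6, 2, 1], ![9, 0, 0, 0, 8, 10, 0, 4, 3], ![7, 10, 8, 0, 0, 0, 4, 0, 5]] : Fin 5 → Fin 9 → ℕ) j k))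
  (by decide +kernel)

theorem pp10 : PP 10 10 := okB_PP _ _ (fun j k => dec 10 ((![![0, 5, 1, 3, 8, 0, 0, 0, 6, 4], ![4, 10, 2, 0, 9, 0, 3, 6, 0, 0], ![1, 7, 0, 0, 0, 3, 0, 8, 9, 2], ![5, 0, 7, 9, 0, 6, 8, 0, 0, 10], ![0, 0, 0, 2, 7, 4, 1, 5, 10, 0]] : Fin 5 → Fin 10 → ℕ) j k))
  (by decide +kernel)

theorem pp_add (K₁ n₁ K₂ n₂ : ℕ) (h₁ : PP K₁ n₁) (h₂ : PP K₂ n₂) : PP (K₁ + K₂) (n₁ + n₂) := by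
  obtain ⟨A, a1, a2, a3, a4⟩ := h₁
  obtain ⟨B, b1, b2, b3, b4⟩ := h₂
  let C : Fin 5 → Fin (K₁ + K₂) → Option (Fin (n₁ + n₂)) := fun j k =>
    Fin.addCases (motive := fun _ => Option (Fin (n₁ + n₂)))
      (fun k => (A j k).map (Fin.castAdd n₂)) (fun k => (B j k).map (Fin.natAdd n₁)) k
  have cl : ∀ j k, C j (Fin.castAdd K₂ k) = (A j k).map (Fin.castAdd n₂) := by
    intro j k; simp [C]
  have cr : ∀ j k, C j (Fin.natAdd K₁ k) = (B j k).map (Fin.natAdd n₁) := by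
    intro j k; simp [C]
  have ne : ∀ (x : Fin n₁) (y : Fin n₂), Fin.castAdd n₂ x ≠ Fin.natAdd n₁ y := by
    intro x y hxy
    have := congrArg Fin.val hxy
    simp at this
    omega
  refine ⟨C, ?_, ?_, ?_, ?_⟩
  · intro k
    induction k using Fin.addCases with
    | left k => rw [← a1 k]; congr 1; ext j; simp [cl]
    | right k => rw [← b1 k]; congr 1; ext j; simp [cr]
  · intro j k₁ k₂ t
    induction k₁ using Fin.addCases with
    | left k₁ =>
      induction k₂ using Fin.addCases with
      | left k₂ =>
        simp only [cl, Option.map_eq_some_iff]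
        rintro ⟨x, hx, rfl⟩ ⟨y, hy, hxy⟩
        rw [Fin.castAdd_injective _ _ hxy] at hy
        rw [a2 j k₁ k₂ x hx hy]
      | right k₂ =>
        simp only [cl, cr, Option.map_eq_some_iff]
        rintro ⟨x, hx, rfl⟩ ⟨y, hy, hxy⟩
        exact absurd hxy.symm (ne _ _)
    | right k₁ =>
      induction k₂ using Fin.addCases with
      | left k₂ =>
        simp only [cl, cr, Option.map_eq_some_iff]
        rintro ⟨x, hx, rfl⟩ ⟨y, hy, hxy⟩
        exact absurd hxy (ne _ _)
      | right k₂ =>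
        simp only [cr, Option.map_eq_some_iff]
        rintro ⟨x, hx, rfl⟩ ⟨y, hy, hxy⟩
        rw [Fin.natAdd_injective _ _ hxy] at hy
        rw [b2 j k₁ k₂ x hx hy]
  · intro j₁ j₂ k t
    induction k using Fin.addCases with
    | left k =>
      simp only [cl, Option.map_eq_some_iff]
      rintro ⟨x, hx, rfl⟩ ⟨y, hy, hxy⟩
      rw [Fin.castAdd_injective _ _ hxy] at hy
      exact a3 _ _ k x hx hy
    | right k =>
      simp only [cr, Option.map_eq_some_iff]
      rintro ⟨x, hx, rfl⟩ ⟨y, hy, hxy⟩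
      rw [Fin.natAdd_injective _ _ hxy] at hy
      exact b3 _ _ k x hx hy
  · intro j₁ j₂ k₁ k₂ t hj
    induction k₁ using Fin.addCases with
    | left k₁ =>
      induction k₂ using Fin.addCases with
      | left k₂ =>
        simp only [cl, Option.map_eq_some_iff]
        rintro hk ⟨x, hx, rfl⟩ ⟨y, hy, hxy⟩
        rw [Fin.castAdd_injective _ _ hxy] at hy
        have := a4 j₁ j₂ k₁ k₂ x hj (fun e => hk (by rw [e])) hx hy
        simp [this]
      | right k₂ =>
        simp only [cl, cr, Option.map_eq_some_iff]
        rintro hk ⟨x, hx, rfl⟩ ⟨y, hy, hxy⟩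
        exact absurd hxy.symm (ne _ _)
    | right k₁ =>
      induction k₂ using Fin.addCases with
      | left k₂ =>
        simp only [cl, cr, Option.map_eq_some_iff]
        rintro hk ⟨x, hx, rfl⟩ ⟨y, hy, hxy⟩
        exact absurd hxy (ne _ _)
      | right k₂ =>
        simp only [cr, Option.map_eq_some_iff]
        rintro hk ⟨x, hx, rfl⟩ ⟨y, hy, hxy⟩
        rw [Fin.natAdd_injective _ _ hxy] at hy
        have := b4 j₁ j₂ k₁ k₂ x hj (fun e => hk (by rw [e])) hx hy
        simp [this]

theorem pp0 : PP 0 0 := ⟨fun _ k => k.elim0, by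
  refine ⟨fun k => k.elim0, fun _ k => k.elim0, fun _ _ k => k.elim0, fun _ _ k => k.elim0⟩⟩

theorem pp_mul (q K n : ℕ) (h : PP K n) : PP (10 * q + K) (10 * q + n) := by
  induction q with
  | zero => simpa using h
  | succ q ih =>
    have := pp_add _ _ _ _ pp10 ih
    have e1 : 10 * (q + 1) + K = 10 + (10 * q + K) := by ring
    have e2 : 10 * (q + 1) + n = 10 + (10 * q + n) := by ring
    rw [e1, e2]
    exact this

theorem upper (K : ℕ) : PP K (if K % 10 = 0 then K else if K % 10 = 9 then K + 1 else K + 2) := by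
  obtain ⟨q, r, hr, rfl⟩ : ∃ q r, r < 10 ∧ K = 10 * q + r :=
    ⟨K / 10, K % 10, Nat.mod_lt _ (by norm_num), by omega⟩
  have e : (10 * q + r) % 10 = r := by omega
  rw [e]
  interval_cases r
  · exact pp_mul q 0 0 pp0
  · exact pp_mul q 1 3 pp1
  · exact pp_mul q 2 4 pp2
  · exact pp_mul q 3 5 pp3
  · exact pp_mul q 4 6 pp4
  · exact pp_mul q 5 7 pp5
  · exact pp_mul q 6 8 pp6
  · exact pp_mul q 7 9 pp7
  · exact pp_mul q 8 10 pp8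
  · exact pp_mul q 9 10 pp9

theorem stmt_18 (K : ℕ) (hK : 0 < K) :
    sPDA 5 K 2 =
      if K % 10 = 0 then K
      else if K % 10 = 9 then K + 1
      else K + 2 := by
  unfold sPDA
  apply le_antisymm
  · exact Nat.sInf_le (upper K)
  · refine le_csInf ⟨_, upper K⟩ ?_
    rintro n ⟨A, hA⟩
    obtain ⟨h1, h2, h3⟩ := lower hA
    split_ifs <;> omega
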